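/- arXiv:1806.05942 — 6 statements merged into one kernel-verified Lean document; each statement's English description precedes it below -/
import Mathlib

section
/- Let u and v be Lyndon words over a linearly ordered alphabet. Then the concatenation uv is aYndon word if and only if u is strictly smaller than v in lexicographic order. (More precisely: uv is a Lyndon word if and only if u < v lexicographically.) -/
/-!
If `uv` is Lyndon then `u < uv < v`, the first step because `u` is a proper prefix of `uv`, the
second because `v` is a proper suffix.

For the converse everything rests on the dichotomy `lex_prefix_or_append`: if `x < y`, then either
`x` is a proper prefix of `y`, or the two words differ at some letter, and then appending anything
to either of them preserves the inequality. Applied to `u < v` it gives `uv < v`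
(`append_lex_of_lex`): in the prefix case `v = ut`, so `v < t` as `v` is Lyndon, whence
`uv < ut = v`. Now let `s` be a nonempty proper suffix of `uv`. If `s` is a suffix of `v`, then
`uv < v ≤ s`. Otherwise `s = cv` with `c` a nonempty proper suffix of `u`; then `u < c`, and `u`,
being longer than `c`, is not a prefix of it, so `uv < cv`.
-/

/-- A word `w` over a linearly ordered alphabet is a Lyndon word if it is nonempty
and strictly lexicographically smaller than each of its nonempty proper suffixes. -/
def IsLyndon {α : Type*} [LinearOrder α] (w : List α) : Prop :=
  w ≠ [] ∧ ∀ u v : List α, w = u ++ v → u ≠ [] → v ≠ [] → List.Lex (· < ·) w v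

/-- Either `x` is a proper prefix of `y`, or the words differ at a letter, so that their order no
longer depends on what follows. -/
theorem lex_prefix_or_append {α : Type*} [LinearOrder α] {x y : List α}
    (h : List.Lex (· < ·) x y) :
    (∃ t, t ≠ [] ∧ y = x ++ t) ∨ ∀ p q, List.Lex (· < ·) (x ++ p) (y ++ q) := by
  induction h with
  | nil => exact Or.inl ⟨_, List.cons_ne_nil _ _, rfl⟩
  | rel h => exact Or.inr fun p q => List.Lex.rel h
  | cons _ ih =>
    rcases ih with ⟨t, ht, rfl⟩ | ih
    · exact Or.inl ⟨t, ht, rfl⟩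
    · exact Or.inr fun p q => List.Lex.cons (ih p q)

theorem append_lex_of_lex {α : Type*} [LinearOrder α] {u v : List α} (hu : u ≠ [])
    (hv : IsLyndon v) (h : List.Lex (· < ·) u v) : List.Lex (· < ·) (u ++ v) v := by
  rcases lex_prefix_or_append h with ⟨t, ht, hvt⟩ | h
  · have h1 := List.Lex.append_left _ (hv.2 u t hvt hu ht) u
    rwa [← hvt] at h1
  · simpa using h v []

theorem lyndon_concat_iff_lt {α : Type*} [LinearOrder α] (u v : List α)
    (hu : IsLyndon u) (hv : IsLyndon v) :
    IsLyndon (u ++ v) ↔ List.Lex (· < ·) u v := by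
  constructor
  · intro h
    have h1 : List.Lex (· < ·) u (u ++ v) := by
      obtain ⟨b, w, rfl⟩ := List.exists_cons_of_ne_nil hv.1
      simpa using List.Lex.append_left (· < ·) (List.Lex.nil (a := b) (l := w)) u
    exact List.lex_trans lt_trans h1 (h.2 u v rfl hu.1 hv.1)
  · intro h
    have huv := append_lex_of_lex hu.1 hv h
    refine ⟨by simp [hu.1], fun a s has ha hs => ?_⟩
    rcases List.append_eq_append_iff.1 has with ⟨c, -, hvc⟩ | ⟨c, huc, rfl⟩
    · rcases eq_or_ne c [] with rfl | hc
      · rw [List.nil_append] at hvc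
        exact hvc ▸ huv
      · exact List.lex_trans lt_trans huv (hv.2 c s hvc hc hs)
    · rcases eq_or_ne c [] with rfl | hc
      · simpa using huv
      · rcases lex_prefix_or_append (hu.2 a c huc ha hc) with ⟨t, -, hct⟩ | h'
        · -- `u = a ++ c` and `c = u ++ t` with `a` nonempty contradict each other by length.
          have h1 := congrArg List.length huc
          have h2 := congrArg List.length hct
          have h3 := List.length_pos_iff.2 ha
          simp only [List.length_append] at h1 h2
          omega
        · exact h' v v
end

section
/- Let u and v be co-Lyndon words over a linearly ordered alphabet. Then the concatenation uv is a co-Lyndon word if and only if v comes strictly before u in co-lexicographic order, i.e. if and only if reverse(v) is strictly lexicographically smaller than reverse(u). -/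
/-- A word is a co-Lyndon word if its reverse is a Lyndon word. -/
def IsCoLyndon {α : Type*} [LinearOrder α] (w : List α) : Prop :=
  IsLyndon w.reverse

/-- A strict lexicographic inequality that is not caused by a prefix is decided at the first
differing letter, so it survives arbitrary extensions of both words on the right. -/
theorem lex_append_append_of_not_prefix {α : Type*} [LinearOrder α] {a b : List α}
    (h : List.Lex (· < ·) a b) (hp : ¬ a <+: b) (x y : List α) :
    List.Lex (· < ·) (a ++ x) (b ++ y) := by
  induction h with
  | nil => exact absurd List.nil_prefix hp
  | rel h => exact List.Lex.rel h
  | cons _ ih =>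
    refine List.Lex.cons (ih fun hq => hp ?_)
    simpa using hq

theorem lex_self_append {α : Type*} [LinearOrder α] (a : List α) {b : List α} (hb : b ≠ []) :
    List.Lex (· < ·) a (a ++ b) := by
  obtain ⟨c, t, rfl⟩ := List.exists_cons_of_ne_nil hb
  simpa using List.Lex.append_left (· < ·) (List.Lex.nil (a := c) (l := t)) a

theorem IsLyndon.append_lex_right {α : Type*} [LinearOrder α] {a b : List α}
    (ha : IsLyndon a) (hb : IsLyndon b) (h : List.Lex (· < ·) a b) :
    List.Lex (· < ·) (a ++ b) b := by
  by_cases hp : a <+: b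
  · obtain ⟨c, hc⟩ := hp
    have hc0 : c ≠ [] := by
      rintro rfl
      rw [List.append_nil] at hc
      subst hc
      exact List.lex_irrefl (fun x => lt_irrefl x) a h
    have hbc := List.Lex.append_left (· < ·) (hb.2 a c hc.symm ha.1 hc0) a
    rwa [hc] at hbc
  · simpa using lex_append_append_of_not_prefix h hp b []

theorem IsLyndon.append_iff {α : Type*} [LinearOrder α] {a b : List α}
    (ha : IsLyndon a) (hb : IsLyndon b) :
    IsLyndon (a ++ b) ↔ List.Lex (· < ·) a b := by
  constructor
  · intro hab
    exact List.lex_trans lt_trans (lex_self_append a hb.1) (hab.2 a b rfl ha.1 hb.1)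
  · intro h
    have key := ha.append_lex_right hb h
    refine ⟨by simp [ha.1], fun s t hst hs ht => ?_⟩
    rcases List.append_eq_append_iff.1 hst with ⟨s', rfl, hb'⟩ | ⟨a', ha', rfl⟩
    · rcases eq_or_ne s' [] with rfl | hs'
      · rw [List.nil_append] at hb'
        rwa [← hb']
      · exact List.lex_trans lt_trans key (hb.2 s' t hb' hs' ht)
    · rcases eq_or_ne a' [] with rfl | h'
      · exact key
      · refine lex_append_append_of_not_prefix (ha.2 s a' ha' hs h') (fun hp => hs ?_) b b
        -- `a = s ++ a'` cannot be a prefix of the shorter word `a'`.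
        have hl := hp.length_le
        rw [ha', List.length_append] at hl
        exact List.length_eq_zero_iff.1 (by omega)

theorem coLyndon_concat_iff {α : Type*} [LinearOrder α] (u v : List α)
    (hu : IsCoLyndon u) (hv : IsCoLyndon v) :
    IsCoLyndon (u ++ v) ↔ List.Lex (· < ·) v.reverse u.reverse := by
  unfold IsCoLyndon at *
  rw [List.reverse_append]
  exact hv.append_iff hu
end

section
/- Every nonempty word x over a linearly ordered alphabet admits a unique factorization x = u1 u2 ... um into Lyndon words u1, u2, ..., um satisfying u1 ≥ u2 ≥ ... ≥ um in lexicographic order (the Lyndon factorization of x): such a factorization exists, and any two such factorizations of x coincide. -/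
/-- If `x < y` then either the words differ at some position, so that the comparison survives
arbitrary extensions, or `x` is a proper prefix of `y`. -/
theorem append_lt_append_or_eq_append {α : Type*} [LinearOrder α] {x y : List α}
    (h : List.Lex (· < ·) x y) :
    (∀ s t : List α, x ++ s < y ++ t) ∨ ∃ w, w ≠ [] ∧ y = x ++ w := by
  induction h with
  | nil => exact Or.inr ⟨_, List.cons_ne_nil _ _, rfl⟩
  | rel hab => exact Or.inl fun s t => List.Lex.rel hab
  | cons _ ih =>
    rcases ih with ih | ⟨w, hw, rfl⟩
    · exact Or.inl fun s t => List.Lex.cons (ih s t)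
    · exact Or.inr ⟨w, hw, rfl⟩

theorem append_lt_append_left' {α : Type*} [LinearOrder α] (s : List α) {x y : List α}
    (h : x < y) : s ++ x < s ++ y :=
  List.Lex.append_left (· < ·) h s

theorem lt_append_of_ne_nil {α : Type*} [LinearOrder α] (s : List α) {w : List α}
    (h : w ≠ []) : s < s ++ w := by
  obtain ⟨a, t, rfl⟩ := List.exists_cons_of_ne_nil h
  simpa using append_lt_append_left' s (show ([] : List α) < a :: t from List.Lex.nil)

theorem IsLyndon.append {α : Type*} [LinearOrder α] {u v : List α}
    (hu : IsLyndon u) (hv : IsLyndon v) (huv : u < v) : IsLyndon (u ++ v) := by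
  have key : u ++ v < v := by
    rcases append_lt_append_or_eq_append huv with h | ⟨w, hw, rfl⟩
    · simpa using h v []
    · exact append_lt_append_left' u (hv.2 u w rfl hu.1 hw)
  refine ⟨by simp [hu.1], fun a b hab ha hb => ?_⟩
  change u ++ v < b
  rcases List.append_eq_append_iff.1 hab with ⟨c, rfl, rfl⟩ | ⟨c, rfl, rfl⟩
  · rcases eq_or_ne c [] with rfl | hc
    · simpa using key
    · exact key.trans (hv.2 c b rfl hc hb)
  · rcases eq_or_ne c [] with rfl | hc
    · simpa using key
    · rcases append_lt_append_or_eq_append (hu.2 a c rfl ha hc) with h | ⟨w, hw, h⟩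
      · exact h v v
      -- `a ++ c` is longer than `c`, so it cannot be a prefix of `c`
      · have h1 := congrArg List.length h
        have h2 := List.length_pos_iff.2 ha
        simp only [List.length_append] at h1
        omega

theorem isLyndon_singleton {α : Type*} [LinearOrder α] (a : α) : IsLyndon [a] := by
  refine ⟨by simp, fun u v h hu hv => ?_⟩
  have h1 := congrArg List.length h
  have h2 := List.length_pos_iff.2 hu
  have h3 := List.length_pos_iff.2 hv
  simp only [List.length_append, List.length_singleton] at h1
  omega

/-- Prepending a Lyndon word to a word that has a Lyndon factorization. -/
theorem exists_factorization_append {α : Type*} [LinearOrder α] (l : List (List α)) :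
    ∀ u : List α, IsLyndon u → (∀ w ∈ l, IsLyndon w) →
      l.IsChain (fun u v => ¬ List.Lex (· < ·) u v) →
      ∃ l' : List (List α), l'.flatten = u ++ l.flatten ∧ (∀ w ∈ l', IsLyndon w) ∧
        l'.IsChain (fun u v => ¬ List.Lex (· < ·) u v) := by
  induction l with
  | nil => exact fun u hu _ _ => ⟨[u], by simp, by simpa using hu, by simp⟩
  | cons v t ih =>
    intro u hu hl hc
    by_cases huv : List.Lex (· < ·) u v
    · obtain ⟨l', h1, h2⟩ := ih (u ++ v) (hu.append (hl v (by simp)) huv)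
        (fun w hw => hl w (by simp [hw])) hc.tail
      exact ⟨l', by simp [h1], h2⟩
    · exact ⟨u :: v :: t, by simp, List.forall_mem_cons.2 ⟨hu, hl⟩,
        List.isChain_cons_cons.2 ⟨huv, hc⟩⟩

theorem exists_factorization {α : Type*} [LinearOrder α] (x : List α) :
    ∃ l : List (List α), l.flatten = x ∧ (∀ w ∈ l, IsLyndon w) ∧
      l.IsChain (fun u v => ¬ List.Lex (· < ·) u v) := by
  induction x with
  | nil => exact ⟨[], by simp⟩
  | cons a x ih =>
    obtain ⟨l, rfl, h1, h2⟩ := ih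
    exact exists_factorization_append l [a] (isLyndon_singleton a) h1 h2

/-- A nonempty prefix `r` of a concatenation ends inside one of the factors: some nonempty suffix
of `r` is a prefix of a factor. -/
theorem exists_suffix_prefix_mem {α : Type*} (l : List (List α)) :
    ∀ r s : List α, r ≠ [] → r ++ s = l.flatten →
      ∃ q p z : List α, p ≠ [] ∧ r = q ++ p ∧ p ++ z ∈ l := by
  induction l with
  | nil => intro r s hr h; simp_all
  | cons v t ih =>
    intro r s hr h
    rw [List.flatten_cons] at h
    rcases List.append_eq_append_iff.1 h with ⟨c, rfl, -⟩ | ⟨c, rfl, h'⟩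
    · exact ⟨[], r, c, hr, rfl, by simp⟩
    · rcases eq_or_ne c [] with rfl | hc
      · exact ⟨[], v, [], by simpa using hr, by simp, by simp⟩
      · obtain ⟨q, p, z, hp, rfl, hm⟩ := ih c s hc h'.symm
        exact ⟨v ++ q, p, z, hp, by simp, by simp [hm]⟩

/-- In a nonincreasing sequence every later factor is at most the first one. -/
theorem le_head_of_isChain {α : Type*} [LinearOrder α] {u : List α} {l : List (List α)}
    (h : (u :: l).IsChain (fun u v => ¬ List.Lex (· < ·) u v)) : ∀ w ∈ l, w ≤ u := by
  have h' : (u :: l).IsChain (fun u v : List α => u ≥ v) := h.imp fun a b hab => not_lt.1 hab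
  exact (List.pairwise_cons.1 (List.isChain_iff_pairwise.1 h')).1

/-- The nonempty first factor `u` of a nonincreasing factorization cannot be properly extended to a
longer Lyndon prefix of the whole word: the nonempty suffix of `r` lying inside a later factor would
be at once larger than `u ++ r` and at most `u`. -/
theorem eq_nil_of_isLyndon_append {α : Type*} [LinearOrder α] {u r s : List α}
    {l : List (List α)} (hu : u ≠ []) (h : (u :: l).IsChain (fun u v => ¬ List.Lex (· < ·) u v))
    (hr : IsLyndon (u ++ r)) (hs : r ++ s = l.flatten) : r = [] := by
  by_contra hne
  obtain ⟨q, p, z, hp, rfl, hm⟩ := exists_suffix_prefix_mem l r s hne hs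
  have h1 : u ++ (q ++ p) < p := hr.2 (u ++ q) p (by simp) (by simp [hu]) hp
  have h2 : p ≤ p ++ z := by
    rcases eq_or_ne z [] with rfl | hz
    · simp
    · exact (lt_append_of_ne_nil p hz).le
  exact absurd (((h1.trans_le h2).trans_le (le_head_of_isChain h _ hm)).trans
    (lt_append_of_ne_nil u hne)) (lt_irrefl _)

theorem factorization_unique {α : Type*} [LinearOrder α] (l : List (List α)) :
    ∀ l' : List (List α), l.flatten = l'.flatten →
      (∀ w ∈ l, IsLyndon w) → l.IsChain (fun u v => ¬ List.Lex (· < ·) u v) →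
      (∀ w ∈ l', IsLyndon w) → l'.IsChain (fun u v => ¬ List.Lex (· < ·) u v) → l = l' := by
  induction l with
  | nil =>
    intro l' h _ _ h' _
    cases l' with
    | nil => rfl
    | cons v t => exact absurd (by simp_all : v = []) (h' v (by simp)).1
  | cons u l ih =>
    intro l' h hl hc hl' hc'
    cases l' with
    | nil => exact absurd (by simp_all : u = []) (hl u (by simp)).1
    | cons v t =>
      have hu := hl u (by simp)
      have hv := hl' v (by simp)
      rw [List.flatten_cons, List.flatten_cons] at h
      have huv : u = v := by
        rcases List.append_eq_append_iff.1 h with ⟨r, rfl, h1⟩ | ⟨r, rfl, h1⟩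
        · simp [eq_nil_of_isLyndon_append hu.1 hc hv h1.symm]
        · simp [eq_nil_of_isLyndon_append hv.1 hc' hu h1.symm]
      subst huv
      rw [ih t (List.append_cancel_left h) (fun w hw => hl w (by simp [hw])) hc.tail
        (fun w hw => hl' w (by simp [hw])) hc'.tail]

/-- Every nonempty word has a unique factorization into a nonincreasing
(in lexicographic order) sequence of Lyndon words. -/
theorem lyndon_factorization_exists_unique {α : Type*} [LinearOrder α]
    (x : List α) (hx : x ≠ []) :
    ∃! l : List (List α),
      l.flatten = x ∧ (∀ u ∈ l, IsLyndon u) ∧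
        l.Chain' (fun u v => ¬ List.Lex (· < ·) u v) := by
  obtain ⟨l, h1, h2, h3⟩ := exists_factorization x
  exact ⟨l, ⟨h1, h2, h3⟩, fun l' ⟨h1', h2', h3'⟩ =>
    factorization_unique l' l (h1'.trans h1.symm) h2' h3' h2 h3⟩
end

section
/- Every nonempty word x over a linearly ordered alphabet admits a unique factorization x = u1 u2 ... um into co-Lyndon words u1, u2, ..., um such that reverse(u1) ≤ reverse(u2) ≤ ... ≤ reverse(um) in lexicographic order: such a factorization exists, and any two such factorizations of x coincide. -/
/-- If `a < b`, either `a` is a proper prefix of `b`, or the two words differ at some position, and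
then the comparison survives extending both words arbitrarily. -/
lemma lt_prefix_or_append {α : Type*} [LinearOrder α] {a b : List α} (h : a < b) :
    (∃ c, c ≠ [] ∧ b = a ++ c) ∨ ∀ s t : List α, a ++ s < b ++ t := by
  induction a generalizing b with
  | nil => exact Or.inl ⟨b, by rintro rfl; simp at h, rfl⟩
  | cons x a ih =>
    cases b with
    | nil => simp at h
    | cons y b =>
      rcases List.cons_lt_cons_iff.1 h with h' | ⟨rfl, h'⟩
      · exact Or.inr fun s t => List.cons_lt_cons_iff.2 (Or.inl h')
      · rcases ih h' with ⟨c, hc, rfl⟩ | h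
        · exact Or.inl ⟨c, hc, rfl⟩
        · exact Or.inr fun s t => List.cons_lt_cons_iff.2 (Or.inr ⟨rfl, h s t⟩)

lemma not_append_lt_left {α : Type*} [LinearOrder α] (a b : List α) : ¬ a ++ b < a := by
  induction a with
  | nil => simp
  | cons x a ih =>
    intro h
    rcases List.cons_lt_cons_iff.1 h with h | ⟨-, h⟩
    · exact lt_irrefl _ h
    · exact ih h

lemma IsLyndon.append_s9 {α : Type*} [LinearOrder α] {a b : List α}
    (ha : IsLyndon a) (hb : IsLyndon b) (hab : a < b) : IsLyndon (a ++ b) := by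
  have key : a ++ b < b := by
    rcases lt_prefix_or_append hab with ⟨c, hc, hbc⟩ | h
    · have h1 : b < c := hb.2 a c hbc ha.1 hc
      have h2 : a ++ b < a ++ c := List.append_left_lt h1
      rwa [← hbc] at h2
    · simpa using h b []
  refine ⟨by simp [ha.1], fun u v huv hu hv => ?_⟩
  change a ++ b < v
  rcases List.append_eq_append_iff.1 huv with ⟨c, rfl, hc⟩ | ⟨c, hc, rfl⟩
  · rcases eq_or_ne c [] with rfl | hc'
    · simpa [hc] using key
    · exact lt_trans key (hb.2 c v hc hc' hv)
  · rcases eq_or_ne c [] with rfl | hc'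
    · simpa using key
    · rcases lt_prefix_or_append (show a < c from ha.2 u c hc hu hc') with ⟨d, -, hd⟩ | h
      -- `c` is shorter than `a`, so `a` cannot be a prefix of `c`
      · have h1 := congrArg List.length hc
        have h2 := congrArg List.length hd
        have h3 := List.length_pos_iff.2 hu
        simp only [List.length_append] at h1 h2
        omega
      · exact h b b

/-- The list `m` is a nonincreasing sequence of Lyndon words. -/
def IsLyndonSeq {α : Type*} [LinearOrder α] (m : List (List α)) : Prop :=
  (∀ u ∈ m, IsLyndon u) ∧ m.IsChain (fun u v => ¬ u < v)

lemma IsLyndonSeq.exists_cons {α : Type*} [LinearOrder α] {m : List (List α)}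
    (hm : IsLyndonSeq m) {a : List α} (ha : IsLyndon a) :
    ∃ m', m'.flatten = a ++ m.flatten ∧ IsLyndonSeq m' := by
  induction m generalizing a with
  | nil => exact ⟨[a], by simp, by simpa using ha, by simp⟩
  | cons b m ih =>
    by_cases hab : a < b
    · obtain ⟨m', h1, h2⟩ := ih ⟨fun u hu => hm.1 u (by simp [hu]), hm.2.tail⟩
        (ha.append_s9 (hm.1 b (by simp)) hab)
      exact ⟨m', by simp [h1], h2⟩
    · refine ⟨a :: b :: m, by simp, ?_, List.isChain_cons_cons.2 ⟨hab, hm.2⟩⟩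
      intro u hu
      rcases List.mem_cons.1 hu with rfl | hu
      · exact ha
      · exact hm.1 u hu

lemma exists_lyndonSeq {α : Type*} [LinearOrder α] (x : List α) :
    ∃ m, m.flatten = x ∧ IsLyndonSeq m := by
  induction x with
  | nil => exact ⟨[], rfl, by simp, by simp⟩
  | cons y x ih =>
    obtain ⟨m, rfl, hm⟩ := ih
    refine hm.exists_cons (a := [y]) ⟨by simp, fun u v h hu hv => ?_⟩
    have h1 := congrArg List.length h
    have h2 := List.length_pos_iff.2 hu
    have h3 := List.length_pos_iff.2 hv
    simp only [List.length_append, List.length_singleton] at h1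
    omega

/-- If all factors are at most `c`, then every nonempty prefix of their concatenation ends in a
nonempty word that is at most `c`, namely a prefix of one of the factors. -/
lemma exists_suffix_le {α : Type*} [LinearOrder α] {c : List α} {m : List (List α)}
    (hm : ∀ u ∈ m, ¬ c < u) {r s : List α} (hr : r ≠ []) (h : r ++ s = m.flatten) :
    ∃ w v, r = w ++ v ∧ v ≠ [] ∧ ¬ c < v := by
  induction m generalizing r with
  | nil => simp_all
  | cons b m ih =>
    rw [List.flatten_cons] at h
    have hb : ¬ c < b := hm b (by simp)
    rcases List.append_eq_append_iff.1 h with ⟨d, rfl, -⟩ | ⟨d, rfl, hd⟩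
    · exact ⟨[], r, rfl, hr, fun hc =>
        hb (lt_of_lt_of_le hc (le_of_not_gt (not_append_lt_left r d)))⟩
    · rcases eq_or_ne d [] with rfl | hd'
      · exact ⟨[], b ++ [], rfl, hr, by simpa using hb⟩
      · obtain ⟨w, v, rfl, hv, hcv⟩ := ih (fun u hu => hm u (by simp [hu])) hd' hd.symm
        exact ⟨b ++ w, v, by simp, hv, hcv⟩

/-- A Lyndon prefix of a concatenated nonincreasing Lyndon sequence does not properly extend the
first factor. -/
lemma IsLyndonSeq.eq_nil_of_append_eq {α : Type*} [LinearOrder α] {a : List α} {m : List (List α)}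
    (hm : IsLyndonSeq (a :: m)) {r s : List α} (h : r ++ s = m.flatten)
    (hr : IsLyndon (a ++ r)) : r = [] := by
  by_contra hne
  have : Trans (fun u v : List α => ¬ u < v) (fun u v => ¬ u < v) (fun u v => ¬ u < v) :=
    ⟨fun h1 h2 => not_lt.2 (le_trans (not_lt.1 h2) (not_lt.1 h1))⟩
  have hle := (List.pairwise_cons.1 (List.isChain_iff_pairwise.1 hm.2)).1
  obtain ⟨w, v, rfl, hv, hav⟩ := exists_suffix_le hle hne h
  have h1 : a ++ (w ++ v) < v :=
    hr.2 (a ++ w) v (by simp) (by simp [(hm.1 a (by simp)).1]) hv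
  exact not_append_lt_left _ _ (lt_of_lt_of_le h1 (not_lt.1 hav))

lemma IsLyndonSeq.eq_of_flatten_eq {α : Type*} [LinearOrder α] {m n : List (List α)}
    (hm : IsLyndonSeq m) (hn : IsLyndonSeq n) (h : m.flatten = n.flatten) : m = n := by
  induction m generalizing n with
  | nil =>
    cases n with
    | nil => rfl
    | cons b n => exact absurd h.symm (by simp [(hn.1 b (by simp)).1])
  | cons a m ih =>
    cases n with
    | nil => exact absurd h (by simp [(hm.1 a (by simp)).1])
    | cons b n =>
      have hab : a = b := by
        rw [List.flatten_cons, List.flatten_cons] at h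
        rcases List.append_eq_append_iff.1 h with ⟨d, hd, hd'⟩ | ⟨d, hd, hd'⟩
        · have := hm.eq_nil_of_append_eq hd'.symm (hd ▸ hn.1 b (by simp))
          simp [hd, this]
        · have := hn.eq_nil_of_append_eq hd'.symm (hd ▸ hm.1 a (by simp))
          simp [hd, this]
      subst hab
      rw [ih (n := n) ⟨fun u hu => hm.1 u (by simp [hu]), hm.2.tail⟩
        ⟨fun u hu => hn.1 u (by simp [hu]), hn.2.tail⟩ (by simpa using h)]

/-- Reversing every factor and the order of the factors translates co-Lyndon factorizations of `x`
into nonincreasing Lyndon factorizations of `x.reverse`. -/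
lemma coLyndon_iff_lyndonSeq {α : Type*} [LinearOrder α] (x : List α) (l : List (List α)) :
    (l.flatten = x ∧ (∀ u ∈ l, IsCoLyndon u) ∧
      l.IsChain (fun u v => ¬ List.Lex (· < ·) v.reverse u.reverse)) ↔
    ((l.map List.reverse).reverse.flatten = x.reverse ∧
      IsLyndonSeq (l.map List.reverse).reverse) := by
  rw [← List.reverse_flatten, List.reverse_inj, IsLyndonSeq, List.isChain_reverse,
    List.isChain_map]
  simp only [List.mem_reverse, List.forall_mem_map]
  rfl

/-- Every nonempty word has a unique factorization into co-Lyndon words whose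
reverses are nondecreasing in lexicographic order. -/
theorem coLyndon_factorization_exists_unique {α : Type*} [LinearOrder α]
    (x : List α) (hx : x ≠ []) :
    ∃! l : List (List α),
      l.flatten = x ∧ (∀ u ∈ l, IsCoLyndon u) ∧
        l.Chain' (fun u v => ¬ List.Lex (· < ·) v.reverse u.reverse) := by
  obtain ⟨m, hm, hL⟩ := exists_lyndonSeq x.reverse
  have hinv : ((m.reverse.map List.reverse).map List.reverse).reverse = m := by
    simp
  refine ⟨m.reverse.map List.reverse,
    (coLyndon_iff_lyndonSeq x _).2 (by rw [hinv]; exact ⟨hm, hL⟩), fun l hl => ?_⟩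
  obtain ⟨h1, h2⟩ := (coLyndon_iff_lyndonSeq x l).1 hl
  rw [← h2.eq_of_flatten_eq hL (h1.trans hm.symm)]
  simp
end

section
/- Let x, y, z be nonempty words over a linearly ordered alphabet such that xy and yz are co-Lyndon words. Then xyz and xyyz are co-Lyndon words, and in co-lexicographic order yz comes before xyyz, xyyz comes before xyz, and xyz comes before xy; that is, reverse(yz) < reverse(xyyz) < reverse(xyz) < reverse(xy) in lexicographic order. -/
/-- A strict lexicographic inequality whose smaller side is the longer word is witnessed by a
mismatched letter, so it is preserved by appending any words. -/
theorem lex_append_of_length_lt {α : Type*} [LinearOrder α] {u v : List α}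
    (h : List.Lex (· < ·) u v) (hl : v.length < u.length) (s t : List α) :
    List.Lex (· < ·) (u ++ s) (v ++ t) := by
  induction h with
  | nil => simp at hl
  | rel h => exact .rel h
  | cons _ ih => exact .cons (ih (by simpa using hl))

theorem lex_append_left {α : Type*} [LinearOrder α] {u v : List α}
    (h : List.Lex (· < ·) u v) (w : List α) : List.Lex (· < ·) (w ++ u) (w ++ v) := by
  induction w with
  | nil => exact h
  | cons _ _ ih => exact .cons ih

theorem lex_trans {α : Type*} [LinearOrder α] {u v w : List α}
    (h₁ : List.Lex (· < ·) u v) (h₂ : List.Lex (· < ·) v w) : List.Lex (· < ·) u w :=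
  lt_trans (a := u) (b := v) (c := w) h₁ h₂

theorem IsLyndon.lex_append_suffix {α : Type*} [LinearOrder α] {u v : List α}
    (h : IsLyndon (u ++ v)) (hu : u ≠ []) (hv : v ≠ []) (s t : List α) :
    List.Lex (· < ·) (u ++ v ++ s) (v ++ t) := by
  refine lex_append_of_length_lt (h.2 u v rfl hu hv) ?_ s t
  have := List.length_pos_iff.2 hu
  simp only [List.length_append]
  omega

/-- If `c ++ b` and `b ++ a = p ++ t` are Lyndon words overlapping in `b`, then extending `c ++ b`
by the nonempty suffix `t` of `b ++ a` gives a Lyndon word. -/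
theorem IsLyndon.append_overlap {α : Type*} [LinearOrder α] {a b c p t : List α}
    (hc : c ≠ []) (hb : b ≠ []) (ht : t ≠ []) (hcb : IsLyndon (c ++ b)) (hba : IsLyndon (b ++ a))
    (hpt : b ++ a = p ++ t) : IsLyndon (c ++ b ++ t) := by
  refine ⟨by simp [hc], fun u v huv hu hv => ?_⟩
  rcases List.append_eq_append_iff.1 huv with ⟨q, rfl, rfl⟩ | ⟨q, hq, rfl⟩
  · -- `v` is a suffix of `t`, hence of `b ++ a`.
    have h₁ : List.Lex (· < ·) (c ++ b ++ (q ++ v)) (b ++ a) := hcb.lex_append_suffix hc hb _ _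
    by_cases hpq : p ++ q = []
    · obtain ⟨rfl, rfl⟩ := List.append_eq_nil_iff.1 hpq
      simpa [hpt] using h₁
    · exact lex_trans h₁ (hba.2 (p ++ q) v (by rw [hpt, List.append_assoc]) hpq hv)
  · by_cases hq0 : q = []
    · subst hq0
      have h₁ : List.Lex (· < ·) (c ++ b ++ t) (b ++ a) := hcb.lex_append_suffix hc hb _ _
      by_cases hp : p = []
      · subst hp
        simpa [hpt] using h₁
      · exact lex_trans h₁ (hba.2 p t hpt hp ht)
    · -- `v = q ++ t` where `q` is a nonempty proper suffix of `c ++ b`.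
      rw [hq] at hcb ⊢
      exact hcb.lex_append_suffix hu hq0 t t

theorem coLyndon_xy_yz {α : Type*} [LinearOrder α] (x y z : List α)
    (hx : x ≠ []) (hy : y ≠ []) (hz : z ≠ [])
    (hxy : IsCoLyndon (x ++ y)) (hyz : IsCoLyndon (y ++ z)) :
    IsCoLyndon (x ++ y ++ z) ∧ IsCoLyndon (x ++ y ++ y ++ z) ∧
      List.Lex (· < ·) (y ++ z).reverse (x ++ y ++ y ++ z).reverse ∧
      List.Lex (· < ·) (x ++ y ++ y ++ z).reverse (x ++ y ++ z).reverse ∧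
      List.Lex (· < ·) (x ++ y ++ z).reverse (x ++ y).reverse := by
  unfold IsCoLyndon at *
  simp only [List.reverse_append] at *
  have ha : x.reverse ≠ [] := by simpa using hx
  have hb : y.reverse ≠ [] := by simpa using hy
  have hc : z.reverse ≠ [] := by simpa using hz
  generalize x.reverse = a at *
  generalize y.reverse = b at *
  generalize z.reverse = c at *
  refine ⟨?_, ?_, ?_, ?_, ?_⟩
  · simpa using IsLyndon.append_overlap (p := b) (t := a) hc hb ha hyz hxy rfl
  · simpa using IsLyndon.append_overlap (p := []) (t := b ++ a) hc hb (by simp [hb]) hyz hxy rfl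
  · -- `c ++ b` is a proper prefix of `c ++ b ++ b ++ a`.
    have h : List.Lex (· < ·) [] (b ++ a) := by
      cases b with
      | nil => exact absurd rfl hb
      | cons => exact .nil
    simpa using lex_append_left h (c ++ b)
  · -- Cancelling `c ++ b` leaves `b ++ a < a`.
    simpa using lex_append_left (hxy.2 b a rfl hb ha) (c ++ b)
  · simpa using hyz.lex_append_suffix hc hb a a
end

section
/- Every Lyndon word w of length at least 2 over a linearly ordered alphabet can be written as a concatenation w = uv where u and v are both Lyndon words and u < v in lexicographic order. -/
/-- A strict lexicographic inequality comes either from a prefix relation or from a differing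
letter, and in the latter case it survives arbitrary extension on the right. -/
lemma lex_prefix_or_append_s15 {α : Type*} [LinearOrder α] {s u : List α}
    (h : List.Lex (· < ·) s u) :
    s <+: u ∨ ∀ a b : List α, List.Lex (· < ·) (s ++ a) (u ++ b) := by
  induction h with
  | nil => exact Or.inl List.nil_prefix
  | cons _ ih =>
    rcases ih with ih | ih
    · exact Or.inl (by simpa using ih)
    · exact Or.inr fun a b => List.Lex.cons (ih a b)
  | rel h => exact Or.inr fun a b => List.Lex.rel h

lemma lex_append_left_cancel {α : Type*} [LinearOrder α] (s : List α) {a b : List α}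
    (h : List.Lex (· < ·) (s ++ a) (s ++ b)) : List.Lex (· < ·) a b := by
  induction s with
  | nil => exact h
  | cons x s ih => exact ih (List.lex_cons_iff.1 h)

lemma exists_min_proper_suffix {α : Type*} [LinearOrder α] (w : List α) (hlen : 2 ≤ w.length) :
    ∃ u v : List α, w = u ++ v ∧ u ≠ [] ∧ v ≠ [] ∧
      ∀ u' v' : List α, w = u' ++ v' → u' ≠ [] → v' ≠ [] → v ≤ v' := by
  have hfin : {v : List α | ∃ u, w = u ++ v ∧ u ≠ [] ∧ v ≠ []}.Finite := by
    refine (w.tails.toFinset.finite_toSet).subset ?_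
    rintro v ⟨u, rfl, -, -⟩
    simp
  have hne : {v : List α | ∃ u, w = u ++ v ∧ u ≠ [] ∧ v ≠ []}.Nonempty := by
    match w, hlen with
    | a :: b :: l, _ => exact ⟨b :: l, [a], by simp⟩
  obtain ⟨v, ⟨u, hw, hu, hv⟩, hmin⟩ := Set.exists_min_image _ id hfin hne
  exact ⟨u, v, hw, hu, hv, fun u' v' h1 h2 h3 => hmin v' ⟨u', h1, h2, h3⟩⟩

theorem lyndon_split {α : Type*} [LinearOrder α] (w : List α)
    (h : IsLyndon w) (hlen : 2 ≤ w.length) :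
    ∃ u v : List α, w = u ++ v ∧ IsLyndon u ∧ IsLyndon v ∧ List.Lex (· < ·) u v := by
  obtain ⟨u, v, rfl, hu, hv, hmin⟩ := exists_min_proper_suffix w hlen
  refine ⟨u, v, rfl, ⟨hu, ?_⟩, ⟨hv, ?_⟩, ?_⟩
  · rintro p s rfl hp hs
    have hw : (p ++ s) ++ v < s ++ v := h.2 p (s ++ v) (by simp) hp (by simp [hs])
    change p ++ s < s
    by_contra hcon
    have hlt : s < p ++ s := lt_of_le_of_ne (not_lt.1 hcon) (by simpa using hp)
    rcases lex_prefix_or_append_s15 hlt with ⟨t, ht⟩ | hext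
    · rw [← ht, List.append_assoc] at hw
      have htv : t ++ v < v := lex_append_left_cancel s hw
      exact absurd htv (not_lt.2 (hmin s (t ++ v) (by rw [← ht, List.append_assoc]) hs
        (by simp [hv])))
    · exact lt_asymm hw (hext v v)
  · rintro p s rfl hp hs
    exact lt_of_le_of_ne (hmin (u ++ p) s (by simp) (by simp [hu]) hs) (by simpa using hp)
  · have huw : u < u ++ v := by
      have := List.Lex.append_left (α := α) (· < ·) (t₁ := []) (t₂ := v)
        ((List.lex_nil_or_eq_nil v).resolve_right hv) u
      rwa [List.append_nil] at this
    exact lt_trans huw (h.2 u v rfl hu hv)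
end
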